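/- Let 1 < p < 2. There is a constant c_p > 0 such that for every real 2π-periodic function l that is linear on the interval (0,2π) (i.e., l(t) = at + b for t ∈ (0,2π)) and every f ∈ A_p(𝕋), one has e^{il}·f ∈ A_p(𝕋) and ‖e^{il}·f‖_{A_p(𝕋)} ≤ c_p · ‖f‖_{A_p(𝕋)}. The constant c_p is independent of f and l. -/

import Mathlib

/-!
Multiplication by `e^{i(at+b)}` acts on Fourier coefficients as convolution with the kernel
`K k = s / (a - k)`, where `|s| ≤ 1` and `|K k| ≤ 1`. Up to an error `O((1 + (x - n)²)⁻¹)` this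
convolution is the restriction to unit intervals of the boundary values of the Cauchy sum
`F z = ∑ c n * i / (z - n + i)`; the error is harmless by Jensen's inequality, because
`∑ (1 + (x - n)²)⁻¹` is bounded in `x`.

For `c ≥ 0` the sum `F` is holomorphic with positive real part on the upper half-plane, and
M. Riesz's argument applies: `|F|^p ≤ A (Re F)^p - B Re (F^p)` pointwise, since `cos (pφ)` is
negative where `cos φ` is small, and `∫ F^p = 0` by Cauchy's theorem. Hence `‖F‖_p` is controlled
by `Re F`, a sum of Poisson kernels, to which Jensen's inequality applies again.

As `p ≤ 2`, every `f ∈ A_p` lies in `L²`, where the convolution formula for the Fourier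
coefficients of a product is Parseval's identity.
-/

open MeasureTheory Real Set
open scoped ENNReal

/-- The k-th Fourier coefficient of a (2π-periodic) function on the circle,
identified with a function on [0, 2π]. -/
noncomputable def fourierCoef (f : ℝ → ℂ) (k : ℤ) : ℂ :=
  (1 / (2 * (Real.pi : ℂ))) *
    ∫ t in (0:ℝ)..(2 * Real.pi), f t * Complex.exp (-Complex.I * (k : ℂ) * (t : ℂ))

/-- The A_p(𝕋) norm: ℓ^p norm of the sequence of Fourier coefficients
(valued in ℝ≥0∞ so that divergence gives ∞). -/
noncomputable def ApNorm (p : ℝ) (f : ℝ → ℂ) : ℝ≥0∞ :=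
  (∑' k : ℤ, ((‖fourierCoef f k‖₊ : ℝ≥0∞) ^ p)) ^ (1 / p)

section

open Filter Topology
open Complex (I)

theorem exists_one_le_mul_cos_rpow_sub {p : ℝ} (hp1 : 1 < p) (hp2 : p ≤ 2) :
    ∃ A B : ℝ, 0 < A ∧
      ∀ φ ∈ Icc 0 (π / 2), 1 ≤ A * cos φ ^ p - B * cos (p * φ) := by
  obtain ⟨θ, hθ, hθ2⟩ : ∃ θ, π / 2 / p < θ ∧ θ < π / 2 :=
    exists_between (div_lt_self (by positivity) hp1)
  have hθ0 : 0 < θ := lt_trans (by positivity) hθ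
  have hpθ : π / 2 < p * θ := by rwa [div_lt_iff₀' (by positivity)] at hθ
  have hcos : 0 < cos θ := cos_pos_of_mem_Ioo ⟨by linarith, hθ2⟩
  have hcosp : cos (p * θ) < 0 := cos_neg_of_pi_div_two_lt_of_lt hpθ (by nlinarith [pi_pos])
  set B : ℝ := (-cos (p * θ))⁻¹
  have hB : 0 < B := inv_pos.mpr (neg_pos.mpr hcosp)
  have hBcos : B * -cos (p * θ) = 1 := inv_mul_cancel₀ (neg_pos.mpr hcosp).ne'
  refine ⟨(1 + B) * (cos θ ^ p)⁻¹, B, by positivity, fun φ ⟨hφ0, hφ⟩ => ?_⟩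
  have hcosφ : 0 ≤ cos φ := cos_nonneg_of_mem_Icc ⟨by linarith, hφ⟩
  rcases le_total θ φ with h | h
  · have hle : cos (p * φ) ≤ cos (p * θ) :=
      cos_le_cos_of_nonneg_of_le_pi (by positivity) (by nlinarith) (by gcongr)
    have hpos : 0 ≤ (1 + B) * (cos θ ^ p)⁻¹ * cos φ ^ p := by positivity
    nlinarith
  · have hle : cos θ ^ p ≤ cos φ ^ p := by
      gcongr
      exact cos_le_cos_of_nonneg_of_le_pi hφ0 (by linarith) h
    have hone : 1 ≤ (cos θ ^ p)⁻¹ * cos φ ^ p := by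
      rwa [inv_mul_eq_div, one_le_div (by positivity)]
    nlinarith [cos_le_one (p * φ)]

theorem exists_norm_rpow_le_re_rpow_sub_cpow_re {p : ℝ} (hp1 : 1 < p) (hp2 : p ≤ 2) :
    ∃ A B : ℝ, 0 < A ∧
      ∀ z : ℂ, 0 ≤ z.re → ‖z‖ ^ p ≤ A * z.re ^ p - B * (z ^ (p : ℂ)).re := by
  obtain ⟨A, B, hA, hAB⟩ := exists_one_le_mul_cos_rpow_sub hp1 hp2
  refine ⟨A, B, hA, fun z hz => ?_⟩
  have harg : |z.arg| ≤ π / 2 := Complex.abs_arg_le_pi_div_two_iff.2 hz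
  have hcos : 0 ≤ cos |z.arg| := cos_nonneg_of_mem_Icc ⟨by linarith [abs_nonneg z.arg], harg⟩
  have hre : z.re = ‖z‖ * cos |z.arg| := by rw [cos_abs, Complex.norm_mul_cos_arg]
  have hpow : (z ^ (p : ℂ)).re = ‖z‖ ^ p * cos (p * |z.arg|) := by
    rw [Complex.cpow_ofReal_re, ← cos_abs (z.arg * p), abs_mul, abs_of_pos (by linarith : 0 < p),
      mul_comm p]
  calc ‖z‖ ^ p ≤ ‖z‖ ^ p * (A * cos |z.arg| ^ p - B * cos (p * |z.arg|)) :=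
        le_mul_of_one_le_right (by positivity) (hAB _ ⟨abs_nonneg _, harg⟩)
    _ = A * z.re ^ p - B * (z ^ (p : ℂ)).re := by
        rw [hpow, hre, mul_rpow (norm_nonneg z) hcos]
        ring

section HalfPlane

variable {E : Type*} [NormedAddCommGroup E] [NormedSpace ℂ E] {G : ℂ → E} {M p : ℝ}

theorem integral_neg_self_eq_of_differentiableOn (hG : DifferentiableOn ℂ G {z | 0 ≤ z.im})
    {R : ℝ} (hR : 0 ≤ R) :
    ∫ x in -R..R, G x = (∫ x in -R..R, G (x + R * I)) - I • (∫ y in (0 : ℝ)..R, G (R + y * I)) +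
      I • ∫ y in (0 : ℝ)..R, G ((-R : ℝ) + y * I) := by
  have hrect := Complex.integral_boundary_rect_eq_zero_of_differentiableOn G (-R : ℝ) (R + R * I)
    (hG.mono fun z hz => by
      have := hz.2
      simp_all [uIcc_of_le])
  simp only [Complex.ofReal_im, Complex.ofReal_re, Complex.add_re, Complex.add_im, Complex.mul_re,
    Complex.mul_im, Complex.I_re, Complex.I_im, mul_zero, mul_one, zero_mul, sub_zero, add_zero,
    zero_add, Complex.ofReal_zero] at hrect
  rw [← sub_eq_zero, ← hrect]
  abel

theorem norm_integral_neg_self_le_of_decay (hp : 1 < p)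
    (hG : DifferentiableOn ℂ G {z | 0 ≤ z.im})
    (hM : ∀ z, 0 ≤ z.im → ‖G z‖ ≤ M * (1 + ‖z‖) ^ (-p)) {R : ℝ} (hR : 0 ≤ R) :
    ‖∫ x in -R..R, G x‖ ≤ 4 * M * (1 + R) ^ (1 - p) := by
  have hM0 : 0 ≤ M := by simpa using (norm_nonneg _).trans (hM 0 le_rfl)
  have hside : ∀ z : ℂ, 0 ≤ z.im → R ≤ ‖z‖ → ‖G z‖ ≤ M * (1 + R) ^ (-p) := fun z hz hRz =>
    (hM z hz).trans (mul_le_mul_of_nonneg_left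
      (rpow_le_rpow_of_nonpos (by positivity) (by gcongr) (by linarith)) hM0)
  have htop : ‖∫ x in -R..R, G (x + R * I)‖ ≤ M * (1 + R) ^ (-p) * |R - -R| :=
    intervalIntegral.norm_integral_le_of_norm_le_const fun x _ =>
      hside _ (by simpa) (by simpa [abs_of_nonneg hR] using Complex.abs_im_le_norm (x + R * I))
  have hvert : ∀ u : ℝ, |u| = R →
      ‖I • ∫ y in (0 : ℝ)..R, G (u + y * I)‖ ≤ M * (1 + R) ^ (-p) * |R - 0| := fun u hu => by
    rw [norm_smul, Complex.norm_I, one_mul]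
    refine intervalIntegral.norm_integral_le_of_norm_le_const fun y hy => ?_
    rw [uIoc_of_le hR] at hy
    exact hside _ (by simpa using hy.1.le) (by simpa [hu] using Complex.abs_re_le_norm (u + y * I))
  calc ‖∫ x in -R..R, G x‖
      ≤ M * (1 + R) ^ (-p) * |R - -R| + M * (1 + R) ^ (-p) * |R - 0|
          + M * (1 + R) ^ (-p) * |R - 0| := by
        rw [integral_neg_self_eq_of_differentiableOn hG hR]
        exact norm_add_le_of_le (norm_sub_le_of_le htop (hvert R (abs_of_nonneg hR)))
          (hvert (-R) (by rw [abs_neg, abs_of_nonneg hR]))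
    _ = 4 * M * (1 + R) ^ (-p) * R := by
        rw [sub_neg_eq_add, sub_zero, abs_of_nonneg hR, abs_of_nonneg (add_nonneg hR hR)]
        ring
    _ ≤ 4 * M * (1 + R) ^ (-p) * (1 + R) := by gcongr; linarith
    _ = 4 * M * (1 + R) ^ (1 - p) := by
        rw [sub_eq_neg_add, rpow_add_one (by positivity)]
        ring

theorem integral_ofReal_eq_zero_of_decay (hp : 1 < p)
    (hG : DifferentiableOn ℂ G {z | 0 ≤ z.im})
    (hM : ∀ z, 0 ≤ z.im → ‖G z‖ ≤ M * (1 + ‖z‖) ^ (-p)) :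
    ∫ x : ℝ, G x = 0 := by
  have hint : Integrable fun x : ℝ => G x := by
    refine ((integrable_one_add_norm (by simpa using hp)).const_mul M).mono' ?_
      (ae_of_all _ fun x => by simpa using hM x (by simp))
    exact (hG.continuousOn.comp_continuous Complex.continuous_ofReal
      fun _ => by simp).aestronglyMeasurable
  refine tendsto_nhds_unique
    (intervalIntegral_tendsto_integral hint tendsto_neg_atTop_atBot tendsto_id) ?_
  have hlim : Tendsto (fun R : ℝ => 4 * M * (1 + R) ^ (1 - p)) atTop (𝓝 0) := by
    simpa using ((tendsto_rpow_neg_atTop (sub_pos.2 hp)).comp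
      (tendsto_atTop_add_const_left atTop 1 tendsto_id)).const_mul (4 * M)
  refine squeeze_zero_norm' ?_ hlim
  filter_upwards [eventually_ge_atTop 0] with R hR
  exact norm_integral_neg_self_le_of_decay hp hG hM hR

end HalfPlane

theorem rpow_le_mul_rpow_neg_of_le_div {x y M p : ℝ} (hx : 0 ≤ x) (hy : 0 < y) (h : x ≤ M / y)
    (hp : 0 ≤ p) : x ^ p ≤ M ^ p * y ^ (-p) := by
  have hM : 0 ≤ M := (mul_nonneg hx hy.le).trans ((le_div_iff₀ hy).1 h)
  rw [rpow_neg hy.le, ← div_eq_mul_inv, ← div_rpow hM hy.le]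
  exact rpow_le_rpow hx h hp

theorem integrable_norm_rpow_of_norm_le_div {E : Type*} [NormedAddCommGroup E] {f : ℝ → E}
    {M p : ℝ} (hp : 1 < p) (hf : Continuous f) (hM : ∀ x, ‖f x‖ ≤ M / (1 + ‖x‖)) :
    Integrable fun x => ‖f x‖ ^ p := by
  have hp0 : 0 ≤ p := by linarith
  refine ((integrable_one_add_norm (by simpa using hp)).const_mul (M ^ p)).mono'
    (hf.norm.rpow_const fun _ => Or.inr hp0).aestronglyMeasurable (ae_of_all _ fun x => ?_)
  rw [norm_of_nonneg (by positivity)]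
  exact rpow_le_mul_rpow_neg_of_le_div (norm_nonneg _) (by positivity) (hM x) hp0

theorem exists_integral_norm_rpow_le_integral_re_rpow {p : ℝ} (hp1 : 1 < p) (hp2 : p ≤ 2) :
    ∃ A : ℝ, 0 < A ∧ ∀ (F : ℂ → ℂ) (M : ℝ), DifferentiableOn ℂ F {z | 0 ≤ z.im} →
      (∀ z, 0 ≤ z.im → 0 < (F z).re) → (∀ z, 0 ≤ z.im → ‖F z‖ ≤ M / (1 + ‖z‖)) →
      ∫ x : ℝ, ‖F x‖ ^ p ≤ A * ∫ x : ℝ, (F x).re ^ p := by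
  obtain ⟨A, B, hA, hAB⟩ := exists_norm_rpow_le_re_rpow_sub_cpow_re hp1 hp2
  refine ⟨A, hA, fun F M hF hre hM => ?_⟩
  have hFp : DifferentiableOn ℂ (fun z => F z ^ (p : ℂ)) {z | 0 ≤ z.im} :=
    hF.cpow_const fun z hz => Or.inl (hre z hz)
  have hcont : Continuous fun x : ℝ => F x :=
    hF.continuousOn.comp_continuous Complex.continuous_ofReal fun _ => by simp
  have hcontp : Continuous fun x : ℝ => F x ^ (p : ℂ) :=
    hFp.continuousOn.comp_continuous Complex.continuous_ofReal fun _ => by simp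
  have hint : Integrable fun x : ℝ => ‖F x‖ ^ p :=
    integrable_norm_rpow_of_norm_le_div hp1 hcont fun x => by simpa using hM x (by simp)
  have hintre : Integrable fun x : ℝ => (F x).re ^ p := by
    refine hint.mono' ((Complex.continuous_re.comp hcont).rpow_const
      fun _ => Or.inr (by linarith)).aestronglyMeasurable (ae_of_all _ fun x => ?_)
    have hrex := (hre x (by simp)).le
    rw [norm_of_nonneg (by positivity)]
    exact rpow_le_rpow hrex (Complex.re_le_norm _) (by linarith)
  have hintp : Integrable fun x : ℝ => F x ^ (p : ℂ) :=
    hint.mono' hcontp.aestronglyMeasurable (ae_of_all _ fun x => (Complex.norm_cpow_real _ _).le)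
  have hintpre : Integrable fun x : ℝ => (F x ^ (p : ℂ)).re := hintp.re
  have hzero : ∫ x : ℝ, F x ^ (p : ℂ) = 0 := by
    refine integral_ofReal_eq_zero_of_decay (M := M ^ p) hp1 hFp fun z hz => ?_
    rw [Complex.norm_cpow_real]
    exact rpow_le_mul_rpow_neg_of_le_div (norm_nonneg _) (by positivity) (hM z hz) (by linarith)
  calc ∫ x : ℝ, ‖F x‖ ^ p
      ≤ ∫ x : ℝ, (A * (F x).re ^ p - B * (F x ^ (p : ℂ)).re) :=
        integral_mono hint ((hintre.const_mul A).sub (hintpre.const_mul B))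
          fun x => hAB _ (hre x (by simp)).le
    _ = A * (∫ x : ℝ, (F x).re ^ p) - B * (∫ x : ℝ, F x ^ (p : ℂ)).re := by
        rw [integral_sub (hintre.const_mul A) (hintpre.const_mul B), integral_const_mul,
          integral_const_mul]
        congr 2
        exact integral_re hintp
    _ = A * ∫ x : ℝ, (F x).re ^ p := by rw [hzero, Complex.zero_re, mul_zero, sub_zero]

theorem sum_le_integral_of_le_on_Ioc {f : ℝ → ℝ} (hf : Integrable f) (hf0 : ∀ x, 0 ≤ f x) (a : ℝ)
    (T : Finset ℤ) {u : ℤ → ℝ} (hu : ∀ m ∈ T, ∀ x ∈ Ioc (a + m) (a + m + 1), u m ≤ f x) :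
    ∑ m ∈ T, u m ≤ ∫ x, f x := by
  have hle : ∀ m ∈ T, u m ≤ ∫ x in Ioc (a + m) (a + m + 1), f x := fun m hm => by
    have h := setIntegral_mono_on (integrableOn_const (C := u m) (by simp))
      hf.integrableOn measurableSet_Ioc (hu m hm)
    simpa using h
  calc ∑ m ∈ T, u m ≤ ∑ m ∈ T, ∫ x in Ioc (a + m) (a + m + 1), f x := Finset.sum_le_sum hle
    _ = ∫ x in ⋃ m ∈ T, Ioc (a + m) (a + m + 1), f x :=
        (integral_biUnion_finset T (fun _ _ => measurableSet_Ioc)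
          ((pairwise_disjoint_Ioc_add_intCast a).set_pairwise _)
          fun _ _ => hf.integrableOn).symm
    _ ≤ ∫ x, f x := setIntegral_le_integral hf (ae_of_all _ hf0)

theorem sum_inv_one_add_sq_le (S : Finset ℤ) (x : ℝ) :
    ∑ n ∈ S, (1 + (x - n) ^ 2)⁻¹ ≤ 3 * π := by
  have hcmp : ∀ n ∈ S, ∀ t ∈ Ioc (0 + n : ℝ) (0 + n + 1),
      (1 + (x - n) ^ 2)⁻¹ ≤ 3 * (1 + (x - t) ^ 2)⁻¹ := fun n _ t ⟨hnt, htn⟩ => by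
    rw [← div_eq_mul_inv, inv_eq_one_div, div_le_div_iff₀ (by positivity) (by positivity)]
    nlinarith [sq_nonneg ((x - n) + (t - n))]
  have hint : Integrable fun t : ℝ => 3 * (1 + (x - t) ^ 2)⁻¹ :=
    (integrable_inv_one_add_sq.comp_sub_left x).const_mul 3
  calc ∑ n ∈ S, (1 + (x - n) ^ 2)⁻¹ ≤ ∫ t : ℝ, 3 * (1 + (x - t) ^ 2)⁻¹ :=
        sum_le_integral_of_le_on_Ioc hint (fun t => by positivity) 0 S hcmp
    _ = 3 * π := by
        rw [integral_const_mul, integral_sub_left_eq_self (fun t : ℝ => (1 + t ^ 2)⁻¹) volume x,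
          integral_univ_inv_one_add_sq]

theorem integral_sum_mul_inv_one_add_sq_rpow_le {p : ℝ} (hp : 1 ≤ p) (S : Finset ℤ) {c : ℤ → ℝ}
    (hc : ∀ n, 0 ≤ c n) :
    ∫ x : ℝ, (∑ n ∈ S, c n * (1 + (x - n) ^ 2)⁻¹) ^ p ≤
      (3 * π) ^ (p - 1) * π * ∑ n ∈ S, c n ^ p := by
  have hp0 : 0 < p := by linarith
  have hjensen : ∀ x : ℝ, (∑ n ∈ S, c n * (1 + (x - n) ^ 2)⁻¹) ^ p ≤
      (3 * π) ^ (p - 1) * ∑ n ∈ S, (1 + (x - n) ^ 2)⁻¹ * c n ^ p := fun x => by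
    have hw0 : 0 ≤ ∑ n ∈ S, (1 + (x - n) ^ 2)⁻¹ := by positivity
    have hs0 : 0 ≤ ∑ n ∈ S, (1 + (x - n) ^ 2)⁻¹ * c n ^ p :=
      Finset.sum_nonneg fun n _ => mul_nonneg (by positivity) (rpow_nonneg (hc n) p)
    calc (∑ n ∈ S, c n * (1 + (x - n) ^ 2)⁻¹) ^ p
        ≤ ((∑ n ∈ S, (1 + (x - n) ^ 2)⁻¹) ^ (1 - p⁻¹) *
            (∑ n ∈ S, (1 + (x - n) ^ 2)⁻¹ * c n ^ p) ^ p⁻¹) ^ p := by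
          simp_rw [mul_comm (c _)]
          exact rpow_le_rpow (Finset.sum_nonneg fun n _ => mul_nonneg (by positivity) (hc n))
            (inner_le_weight_mul_Lp_of_nonneg S hp _ _ (fun n => by positivity) hc) hp0.le
      _ = (∑ n ∈ S, (1 + (x - n) ^ 2)⁻¹) ^ (p - 1) *
            ∑ n ∈ S, (1 + (x - n) ^ 2)⁻¹ * c n ^ p := by
          rw [mul_rpow (by positivity) (by positivity), ← rpow_mul hw0, rpow_inv_rpow hs0 hp0.ne',
            sub_mul, one_mul, inv_mul_cancel₀ hp0.ne']
      _ ≤ _ := by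
          gcongr
          exact sum_inv_one_add_sq_le S x
  have hint : ∀ n ∈ S, Integrable fun x : ℝ => (1 + (x - n) ^ 2)⁻¹ * c n ^ p := fun n _ =>
    (integrable_inv_one_add_sq.comp_sub_right (n : ℝ)).mul_const _
  calc ∫ x : ℝ, (∑ n ∈ S, c n * (1 + (x - n) ^ 2)⁻¹) ^ p
      ≤ ∫ x : ℝ, (3 * π) ^ (p - 1) * ∑ n ∈ S, (1 + (x - n) ^ 2)⁻¹ * c n ^ p :=
        integral_mono_of_nonneg (ae_of_all _ fun x => rpow_nonneg
            (Finset.sum_nonneg fun n _ => mul_nonneg (hc n) (by positivity)) p)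
          ((integrable_finsetSum S hint).const_mul _) (ae_of_all _ hjensen)
    _ = (3 * π) ^ (p - 1) * ∑ n ∈ S, π * c n ^ p := by
        rw [integral_const_mul, integral_finsetSum S hint]
        simp_rw [integral_mul_const,
          fun n : ℤ => integral_sub_right_eq_self (μ := volume) (fun x : ℝ => (1 + x ^ 2)⁻¹) n,
          integral_univ_inv_one_add_sq]
    _ = (3 * π) ^ (p - 1) * π * ∑ n ∈ S, c n ^ p := by rw [← Finset.mul_sum, mul_assoc]

theorem re_I_div (w : ℂ) : (I / w).re = w.im / Complex.normSq w := by
  simp [Complex.div_re]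

theorem normSq_ofReal_add_I (y : ℝ) : Complex.normSq (y + I) = 1 + y ^ 2 := by
  simpa [add_comm] using Complex.normSq_add_mul_I y 1

/-- The finite sum of Cauchy kernels with weights `c n` and poles `n - i`, for `n ∈ S`. The factor
`i` makes each kernel have positive real part on the closed upper half-plane; on the real line that
real part is `(1 + (x - n) ^ 2)⁻¹`. -/
noncomputable def cauchySum (S : Finset ℤ) (c : ℤ → ℂ) (z : ℂ) : ℂ :=
  ∑ n ∈ S, c n * (I / (z - n + I))

section CauchySum

variable (S : Finset ℤ) {z : ℂ}

theorem one_le_norm_sub_intCast_add_I (hz : 0 ≤ z.im) (n : ℤ) : 1 ≤ ‖z - n + I‖ := by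
  have him : (z - n + I).im = z.im + 1 := by simp
  linarith [(le_abs_self _).trans (Complex.abs_im_le_norm (z - n + I))]

theorem sub_intCast_add_I_ne_zero (hz : 0 ≤ z.im) (n : ℤ) : z - n + I ≠ 0 :=
  norm_pos_iff.1 (one_pos.trans_le (one_le_norm_sub_intCast_add_I hz n))

theorem differentiableOn_cauchySum (c : ℤ → ℂ) :
    DifferentiableOn ℂ (cauchySum S c) {z | 0 ≤ z.im} := by
  refine DifferentiableOn.fun_sum fun n _ z hz => ?_
  have := sub_intCast_add_I_ne_zero hz n
  fun_prop (disch := assumption)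

theorem continuous_cauchySum_ofReal (c : ℤ → ℂ) : Continuous fun x : ℝ => cauchySum S c x :=
  (differentiableOn_cauchySum S c).continuousOn.comp_continuous Complex.continuous_ofReal
    fun _ => by simp

theorem norm_cauchySum_le (c : ℤ → ℂ) (hz : 0 ≤ z.im) :
    ‖cauchySum S c z‖ ≤ (∑ n ∈ S, ‖c n‖ * (3 + ‖(n : ℂ)‖)) / (1 + ‖z‖) := by
  rw [Finset.sum_div]
  refine (norm_sum_le _ _).trans (Finset.sum_le_sum fun n _ => ?_)
  have hone := one_le_norm_sub_intCast_add_I hz n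
  have hz_le : ‖z‖ ≤ ‖z - n + I‖ + (‖(n : ℂ)‖ + 1) := calc
    ‖z‖ = ‖(z - n + I) + (n - I)‖ := by ring_nf
    _ ≤ ‖z - n + I‖ + (‖(n : ℂ)‖ + ‖I‖) := norm_add_le_of_le le_rfl (norm_sub_le _ _)
    _ = ‖z - n + I‖ + (‖(n : ℂ)‖ + 1) := by rw [Complex.norm_I]
  rw [norm_mul, norm_div, Complex.norm_I, mul_div_assoc]
  refine mul_le_mul_of_nonneg_left ?_ (norm_nonneg _)
  rw [div_le_div_iff₀ (by positivity) (by positivity)]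
  nlinarith [norm_nonneg (n : ℂ)]

theorem integrable_norm_cauchySum_rpow {p : ℝ} (hp : 1 < p) (c : ℤ → ℂ) :
    Integrable fun x : ℝ => ‖cauchySum S c x‖ ^ p :=
  integrable_norm_rpow_of_norm_le_div hp (continuous_cauchySum_ofReal S c) fun x => by
    simpa using norm_cauchySum_le S c (z := x) (by simp)

theorem cauchySum_ofReal_re (c : ℤ → ℝ) (x : ℝ) :
    (cauchySum S (fun n => c n) x).re = ∑ n ∈ S, c n * (1 + (x - n) ^ 2)⁻¹ := by
  rw [cauchySum, Complex.re_sum]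
  refine Finset.sum_congr rfl fun n _ => ?_
  have hnormSq : Complex.normSq (x - n + I) = 1 + (x - n) ^ 2 := by
    simpa using normSq_ofReal_add_I (x - n)
  rw [Complex.re_ofReal_mul, re_I_div, hnormSq]
  simp

theorem cauchySum_re_pos {S : Finset ℤ} {c : ℤ → ℝ} (hc : ∀ n, 0 ≤ c n) (hS : ∃ n ∈ S, 0 < c n)
    (hz : 0 ≤ z.im) : 0 < (cauchySum S (fun n => c n) z).re := by
  have hker : ∀ n : ℤ, 0 < (I / (z - n + I)).re := fun n => by
    rw [re_I_div]
    exact div_pos (by simpa using by linarith)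
      (Complex.normSq_pos.2 (sub_intCast_add_I_ne_zero hz n))
  obtain ⟨n, hn, hcn⟩ := hS
  simp only [cauchySum, Complex.re_sum, Complex.re_ofReal_mul]
  exact Finset.sum_pos' (fun i _ => mul_nonneg (hc i) (hker i).le) ⟨n, hn, mul_pos hcn (hker n)⟩

theorem exists_integral_norm_cauchySum_ofReal_rpow_le {p : ℝ} (hp1 : 1 < p) (hp2 : p ≤ 2) :
    ∃ C : ℝ, 0 < C ∧ ∀ (S : Finset ℤ) (c : ℤ → ℝ), (∀ n, 0 ≤ c n) →
      ∫ x : ℝ, ‖cauchySum S (fun n => c n) x‖ ^ p ≤ C * ∑ n ∈ S, c n ^ p := by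
  obtain ⟨A, hA, hRiesz⟩ := exists_integral_norm_rpow_le_integral_re_rpow hp1 hp2
  refine ⟨A * ((3 * π) ^ (p - 1) * π), by positivity, fun S c hc => ?_⟩
  by_cases hS : ∃ n ∈ S, 0 < c n
  · calc ∫ x : ℝ, ‖cauchySum S (fun n => c n) x‖ ^ p
        ≤ A * ∫ x : ℝ, (cauchySum S (fun n => c n) x).re ^ p :=
          hRiesz _ _ (differentiableOn_cauchySum S _) (fun _ hz => cauchySum_re_pos hc hS hz)
            fun _ hz => norm_cauchySum_le S _ hz
      _ ≤ A * ((3 * π) ^ (p - 1) * π * ∑ n ∈ S, c n ^ p) := by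
          simp_rw [cauchySum_ofReal_re]
          gcongr
          exact integral_sum_mul_inv_one_add_sq_rpow_le hp1.le S hc
      _ = _ := (mul_assoc _ _ _).symm
  · have hc0 : ∀ n ∈ S, c n = 0 := fun n hn =>
      le_antisymm (not_lt.1 fun h => hS ⟨n, hn, h⟩) (hc n)
    have hF0 : ∀ z, cauchySum S (fun n => c n) z = 0 := fun z =>
      Finset.sum_eq_zero fun n hn => by simp [hc0 n hn]
    have hnonneg : 0 ≤ ∑ n ∈ S, c n ^ p := Finset.sum_nonneg fun n _ => rpow_nonneg (hc n) p
    simp only [hF0, norm_zero, zero_rpow (by linarith : p ≠ 0), integral_zero]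
    positivity

theorem sum_I_pow_mul_max_re (w : ℂ) :
    ∑ j : Fin 4, I ^ (j : ℕ) * (max ((-I) ^ (j : ℕ) * w).re 0 : ℝ) = w := by
  have hsub : ∀ x : ℝ, max x 0 - max (-x) 0 = x := fun x => by
    rcases le_total x 0 with h | h <;> simp [h]
  calc ∑ j : Fin 4, I ^ (j : ℕ) * (max ((-I) ^ (j : ℕ) * w).re 0 : ℝ)
      = (max w.re 0 : ℝ) + I * (max w.im 0 : ℝ) - (max (-w.re) 0 : ℝ)
          - I * (max (-w.im) 0 : ℝ) := by
        simp [Fin.sum_univ_four, pow_succ, sub_eq_add_neg]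
    _ = (max w.re 0 - max (-w.re) 0 : ℝ) + (max w.im 0 - max (-w.im) 0 : ℝ) * I := by
        push_cast
        ring
    _ = w := by rw [hsub, hsub, Complex.re_add_im]

theorem norm_cauchySum_rpow_le {p : ℝ} (hp : 1 ≤ p) (c : ℤ → ℂ) :
    ‖cauchySum S c z‖ ^ p ≤ 4 ^ (p - 1) * ∑ j : Fin 4,
      ‖cauchySum S (fun n => (max ((-I) ^ (j : ℕ) * c n).re 0 : ℝ)) z‖ ^ p := by
  have hlin : cauchySum S c z = ∑ j : Fin 4,
      I ^ (j : ℕ) * cauchySum S (fun n => (max ((-I) ^ (j : ℕ) * c n).re 0 : ℝ)) z := by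
    simp_rw [cauchySum, Finset.mul_sum]
    rw [Finset.sum_comm]
    refine Finset.sum_congr rfl fun n _ => ?_
    simp_rw [← mul_assoc]
    rw [← Finset.sum_mul, sum_I_pow_mul_max_re]
  have hnorm : ‖cauchySum S c z‖ ≤ ∑ j : Fin 4,
      ‖cauchySum S (fun n => (max ((-I) ^ (j : ℕ) * c n).re 0 : ℝ)) z‖ := by
    rw [hlin]
    exact (norm_sum_le _ _).trans_eq (by simp)
  refine (rpow_le_rpow (norm_nonneg _) hnorm (by linarith)).trans ?_
  simpa using rpow_sum_le_const_mul_sum_rpow_of_nonneg Finset.univ hp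
    fun (j : Fin 4) _ => norm_nonneg (cauchySum S
      (fun n => (max ((-I) ^ (j : ℕ) * c n).re 0 : ℝ)) z)

theorem exists_integral_norm_cauchySum_rpow_le {p : ℝ} (hp1 : 1 < p) (hp2 : p ≤ 2) :
    ∃ C : ℝ, 0 < C ∧ ∀ (S : Finset ℤ) (c : ℤ → ℂ),
      ∫ x : ℝ, ‖cauchySum S c x‖ ^ p ≤ C * ∑ n ∈ S, ‖c n‖ ^ p := by
  obtain ⟨C, hC, hreal⟩ := exists_integral_norm_cauchySum_ofReal_rpow_le hp1 hp2
  refine ⟨4 ^ (p - 1) * (4 * C), by positivity, fun S c => ?_⟩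
  set d : Fin 4 → ℤ → ℝ := fun j n => max ((-I) ^ (j : ℕ) * c n).re 0
  have hd0 : ∀ j n, 0 ≤ d j n := fun _ _ => le_max_right _ _
  have hd : ∀ j n, d j n ≤ ‖c n‖ := fun j n =>
    max_le ((Complex.re_le_norm _).trans_eq (by simp)) (norm_nonneg _)
  have hint : ∀ j ∈ Finset.univ,
      Integrable fun x : ℝ => ‖cauchySum S (fun n => d j n) x‖ ^ p := fun _ _ =>
    integrable_norm_cauchySum_rpow S hp1 _
  calc ∫ x : ℝ, ‖cauchySum S c x‖ ^ p
      ≤ ∫ x : ℝ, 4 ^ (p - 1) * ∑ j, ‖cauchySum S (fun n => d j n) x‖ ^ p :=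
        integral_mono (integrable_norm_cauchySum_rpow S hp1 c)
          ((integrable_finsetSum _ hint).const_mul _) fun x => norm_cauchySum_rpow_le S hp1.le c
    _ = 4 ^ (p - 1) * ∑ j, ∫ x : ℝ, ‖cauchySum S (fun n => d j n) x‖ ^ p := by
        rw [integral_const_mul, integral_finsetSum _ hint]
    _ ≤ 4 ^ (p - 1) * ∑ _j : Fin 4, C * ∑ n ∈ S, ‖c n‖ ^ p := by
        gcongr with j
        refine (hreal S (d j) (hd0 j)).trans ?_
        gcongr with n
        exact hd j n
    _ = 4 ^ (p - 1) * (4 * C) * ∑ n ∈ S, ‖c n‖ ^ p := by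
        simp only [Finset.sum_const, Finset.card_univ, Fintype.card_fin, nsmul_eq_mul,
          Nat.cast_ofNat]
        ring

end CauchySum

theorem norm_sub_cauchyKernel_le {K s : ℂ} {b y : ℝ} (hK : ‖K‖ ≤ 1) (hs : ‖s‖ ≤ 1)
    (hKs : K * b = s) (hy : |y + b| ≤ 1) :
    ‖K - s * I * (I / (y + I))‖ ≤ 6 * (1 + y ^ 2)⁻¹ := by
  have hyI : ‖(y + I : ℂ)‖ ^ 2 = 1 + y ^ 2 := by
    rw [← Complex.normSq_eq_norm_sq, normSq_ofReal_add_I]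
  have hpos : 0 < ‖(y + I : ℂ)‖ := by
    rw [norm_pos_iff]
    intro h
    simpa using congrArg Complex.im h
  have hbI : ‖((y + b : ℝ) + I : ℂ)‖ ≤ 2 :=
    (norm_add_le _ _).trans (by rw [Complex.norm_real, Complex.norm_I, norm_eq_abs]; linarith)
  have herr : K - s * I * (I / (y + I)) = K * ((y + b : ℝ) + I) / (y + I) := by
    have := norm_pos_iff.1 hpos
    field_simp
    push_cast
    linear_combination -s * Complex.I_sq - hKs
  have hdecay : ‖K‖ * ‖(y + I : ℂ)‖ ≤ 3 := calc
    ‖K‖ * ‖(y + I : ℂ)‖ = ‖K * ((y + b : ℝ) + I) - s‖ := by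
      rw [← norm_mul, ← hKs]
      push_cast
      ring_nf
    _ ≤ 1 * 2 + 1 := by
      refine norm_sub_le_of_le ?_ hs
      rw [norm_mul]
      gcongr
    _ = 3 := by norm_num
  rw [herr, norm_div, norm_mul, ← div_eq_mul_inv, ← hyI, div_le_div_iff₀ hpos (by positivity)]
  calc ‖K‖ * ‖((y + b : ℝ) + I : ℂ)‖ * ‖(y + I : ℂ)‖ ^ 2
      = (‖K‖ * ‖(y + I : ℂ)‖) * ‖((y + b : ℝ) + I : ℂ)‖ * ‖(y + I : ℂ)‖ := by ring
    _ ≤ 3 * 2 * ‖(y + I : ℂ)‖ := by gcongr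
    _ = 6 * ‖(y + I : ℂ)‖ := by norm_num

section Kernel

variable {K : ℤ → ℂ} {a : ℝ} {s : ℂ}

theorem norm_sum_mul_sub_le (hK : ∀ k, ‖K k‖ ≤ 1) (hs : ‖s‖ ≤ 1) (hKs : ∀ k, K k * (a - k) = s)
    (S : Finset ℤ) (c : ℤ → ℂ) {m : ℤ} {x : ℝ} (hx : x ∈ Ioc (-a + m) (-a + m + 1)) :
    ‖∑ n ∈ S, c n * K (m - n)‖ ≤
      ‖cauchySum S c x‖ + 6 * ∑ n ∈ S, ‖c n‖ * (1 + (x - n) ^ 2)⁻¹ := by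
  have hker : ∀ n : ℤ, ‖K (m - n) - s * I * (I / (x - n + I))‖ ≤ 6 * (1 + (x - n) ^ 2)⁻¹ :=
    fun n => by
    have hb : K (m - n) * (a - (m - n) : ℝ) = s := by simpa using hKs (m - n)
    have hdist : |(x - n) + (a - (m - n))| ≤ 1 := by
      rw [abs_le]
      constructor <;> linarith [hx.1, hx.2]
    simpa using norm_sub_cauchyKernel_le (hK (m - n)) hs hb hdist
  have hsplit : ∑ n ∈ S, c n * K (m - n) = s * I * cauchySum S c x +
      ∑ n ∈ S, c n * (K (m - n) - s * I * (I / (x - n + I))) := by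
    rw [cauchySum, Finset.mul_sum, ← Finset.sum_add_distrib]
    exact Finset.sum_congr rfl fun n _ => by ring
  rw [hsplit, Finset.mul_sum]
  refine norm_add_le_of_le ?_ (norm_sum_le_of_le S fun n _ => ?_)
  · rw [norm_mul, norm_mul, Complex.norm_I, mul_one]
    exact mul_le_of_le_one_left (norm_nonneg _) hs
  · rw [norm_mul, mul_left_comm]
    exact mul_le_mul_of_nonneg_left (hker n) (norm_nonneg _)

theorem norm_sum_mul_sub_rpow_le {p : ℝ} (hp : 1 ≤ p) (hK : ∀ k, ‖K k‖ ≤ 1) (hs : ‖s‖ ≤ 1)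
    (hKs : ∀ k, K k * (a - k) = s) (S : Finset ℤ) (c : ℤ → ℂ) {m : ℤ} {x : ℝ}
    (hx : x ∈ Ioc (-a + m) (-a + m + 1)) :
    ‖∑ n ∈ S, c n * K (m - n)‖ ^ p ≤ 2 ^ (p - 1) *
      (‖cauchySum S c x‖ ^ p + 6 ^ p * (∑ n ∈ S, ‖c n‖ * (1 + (x - n) ^ 2)⁻¹) ^ p) := by
  have hG : 0 ≤ ∑ n ∈ S, ‖c n‖ * (1 + (x - n) ^ 2)⁻¹ := by positivity
  have hconv : ∀ u v : ℝ, 0 ≤ u → 0 ≤ v → (u + v) ^ p ≤ 2 ^ (p - 1) * (u ^ p + v ^ p) :=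
    fun u v hu hv => mod_cast NNReal.rpow_add_le_mul_rpow_add_rpow ⟨u, hu⟩ ⟨v, hv⟩ hp
  refine (rpow_le_rpow (norm_nonneg _) (norm_sum_mul_sub_le hK hs hKs S c hx)
    (by linarith)).trans ?_
  rw [← mul_rpow (by norm_num) hG]
  exact hconv _ _ (norm_nonneg _) (by positivity)

theorem integrable_sum_mul_inv_one_add_sq_rpow {p : ℝ} (hp : 1 < p) (S : Finset ℤ) {c : ℤ → ℝ}
    (hc : ∀ n, 0 ≤ c n) :
    Integrable fun x : ℝ => (∑ n ∈ S, c n * (1 + (x - n) ^ 2)⁻¹) ^ p := by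
  simp_rw [← cauchySum_ofReal_re]
  have hre0 : ∀ x : ℝ, 0 ≤ (cauchySum S (fun n => c n) x).re := fun x => by
    rw [cauchySum_ofReal_re]
    exact Finset.sum_nonneg fun n _ => mul_nonneg (hc n) (by positivity)
  refine (integrable_norm_cauchySum_rpow S hp fun n => c n).mono' ?_ (ae_of_all _ fun x => ?_)
  · exact ((Complex.continuous_re.comp (continuous_cauchySum_ofReal S _)).rpow_const
      fun _ => Or.inr (by linarith)).aestronglyMeasurable
  · rw [norm_of_nonneg (rpow_nonneg (hre0 x) p)]
    exact rpow_le_rpow (hre0 x) (Complex.re_le_norm _) (by linarith)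

theorem exists_sum_norm_sum_mul_sub_rpow_le {p : ℝ} (hp1 : 1 < p) (hp2 : p ≤ 2) :
    ∃ C : ℝ, 0 < C ∧ ∀ {K : ℤ → ℂ} {a : ℝ} {s : ℂ}, (∀ k, ‖K k‖ ≤ 1) → ‖s‖ ≤ 1 →
      (∀ k, K k * (a - k) = s) → ∀ (S T : Finset ℤ) (c : ℤ → ℂ),
      ∑ m ∈ T, ‖∑ n ∈ S, c n * K (m - n)‖ ^ p ≤ C * ∑ n ∈ S, ‖c n‖ ^ p := by
  obtain ⟨C, hC, hCauchy⟩ := exists_integral_norm_cauchySum_rpow_le hp1 hp2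
  refine ⟨2 ^ (p - 1) * (C + 6 ^ p * ((3 * π) ^ (p - 1) * π)), by positivity,
    fun {K a s} hK hs hKs S T c => ?_⟩
  have hF := integrable_norm_cauchySum_rpow S hp1 c
  have hG := (integrable_sum_mul_inv_one_add_sq_rpow hp1 S fun n => norm_nonneg (c n)).const_mul
    (6 ^ p)
  have hFG : Integrable fun x : ℝ => 2 ^ (p - 1) *
      (‖cauchySum S c x‖ ^ p + 6 ^ p * (∑ n ∈ S, ‖c n‖ * (1 + (x - n) ^ 2)⁻¹) ^ p) :=
    (hF.add hG).const_mul _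
  calc ∑ m ∈ T, ‖∑ n ∈ S, c n * K (m - n)‖ ^ p
      ≤ ∫ x : ℝ, 2 ^ (p - 1) *
          (‖cauchySum S c x‖ ^ p + 6 ^ p * (∑ n ∈ S, ‖c n‖ * (1 + (x - n) ^ 2)⁻¹) ^ p) :=
        sum_le_integral_of_le_on_Ioc hFG (fun x => by positivity) (-a) T
          fun m _ x hx => norm_sum_mul_sub_rpow_le hp1.le hK hs hKs S c hx
    _ = 2 ^ (p - 1) * ((∫ x : ℝ, ‖cauchySum S c x‖ ^ p) +
          6 ^ p * ∫ x : ℝ, (∑ n ∈ S, ‖c n‖ * (1 + (x - n) ^ 2)⁻¹) ^ p) := by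
        rw [integral_const_mul, integral_add hF hG, integral_const_mul]
    _ ≤ 2 ^ (p - 1) * (C * ∑ n ∈ S, ‖c n‖ ^ p +
          6 ^ p * ((3 * π) ^ (p - 1) * π * ∑ n ∈ S, ‖c n‖ ^ p)) := by
        gcongr
        · exact hCauchy S c
        · exact integral_sum_mul_inv_one_add_sq_rpow_le hp1.le S fun n => norm_nonneg _
    _ = 2 ^ (p - 1) * (C + 6 ^ p * ((3 * π) ^ (p - 1) * π)) * ∑ n ∈ S, ‖c n‖ ^ p := by ring

end Kernel

theorem tsum_enorm_rpow_le_of_forall_sum_le {ι κ : Type*} {p C : ℝ} (hp : 0 ≤ p) (hC : 0 ≤ C)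
    {v : ι → κ → ℂ} {c : ι → ℂ} {d : κ → ℂ} (hd : ∀ m, HasSum (fun n => c n * v n m) (d m))
    (hv : ∀ (S : Finset ι) (T : Finset κ),
      ∑ m ∈ T, ‖∑ n ∈ S, c n * v n m‖ ^ p ≤ C * ∑ n ∈ S, ‖c n‖ ^ p) :
    ∑' m, ‖d m‖ₑ ^ p ≤ ENNReal.ofReal C * ∑' n, ‖c n‖ₑ ^ p := by
  have henorm : ∀ x : ℂ, ‖x‖ₑ ^ p = ENNReal.ofReal (‖x‖ ^ p) := fun x => by
    rw [← ofReal_norm, ENNReal.ofReal_rpow_of_nonneg (norm_nonneg _) hp]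
  have hfin : ∀ (S : Finset ι) (T : Finset κ),
      ∑ m ∈ T, ‖∑ n ∈ S, c n * v n m‖ₑ ^ p ≤ ENNReal.ofReal C * ∑ n ∈ S, ‖c n‖ₑ ^ p :=
    fun S T => by
    have hnonneg : ∀ x : ℂ, 0 ≤ ‖x‖ ^ p := fun x => by positivity
    simp_rw [henorm]
    rw [← ENNReal.ofReal_sum_of_nonneg fun m _ => hnonneg _,
      ← ENNReal.ofReal_sum_of_nonneg fun n _ => hnonneg _, ← ENNReal.ofReal_mul hC]
    exact ENNReal.ofReal_le_ofReal (hv S T)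
  rw [ENNReal.tsum_eq_iSup_sum]
  refine iSup_le fun T => ?_
  have hlim : Tendsto (fun S : Finset ι => ∑ m ∈ T, ‖∑ n ∈ S, c n * v n m‖ₑ ^ p) atTop
      (𝓝 (∑ m ∈ T, ‖d m‖ₑ ^ p)) :=
    tendsto_finsetSum T fun m _ => (hd m).enorm.ennrpow_const p
  exact le_of_tendsto hlim <| Eventually.of_forall fun S => (hfin S T).trans <|
    mul_le_mul_right (ENNReal.sum_le_tsum S) _

section Uniqueness

variable {E : Type*} [NormedAddCommGroup E]

theorem ae_eq_zero_of_forall_integral_boundedContinuous_smul_eq_zero [NormedSpace ℝ E]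
    [CompleteSpace E] {X : Type*} [TopologicalSpace X] [MeasurableSpace X] [BorelSpace X]
    [HasOuterApproxClosed X] {μ : Measure X} {F : X → E} (hF : Integrable F μ)
    (h : ∀ φ : BoundedContinuousFunction X NNReal, ∫ x, (φ x : ℝ) • F x ∂μ = 0) :
    F =ᵐ[μ] 0 := by
  refine ae_eq_zero_of_forall_setIntegral_isClosed_eq_zero hF fun s hs => ?_
  have hlim : Tendsto (fun n => ∫ x, (hs.apprSeq n x : ℝ) • F x ∂μ) atTop
      (𝓝 (∫ x in s, F x ∂μ)) := by
    rw [← integral_indicator hs.measurableSet]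
    refine tendsto_integral_of_dominated_convergence (fun x => ‖F x‖) (fun n => ?_) hF.norm
      (fun n => ae_of_all _ fun x => ?_) (ae_of_all _ fun x => ?_)
    · exact (NNReal.continuous_coe.comp (hs.apprSeq n).continuous).aestronglyMeasurable.smul
        hF.aestronglyMeasurable
    · rw [norm_smul, NNReal.norm_eq]
      exact mul_le_of_le_one_left (norm_nonneg _)
        (mod_cast HasOuterApproxClosed.apprSeq_apply_le_one hs n x)
    · have hx := ((NNReal.continuous_coe.tendsto _).comp
        (tendsto_pi_nhds.1 (HasOuterApproxClosed.tendsto_apprSeq hs) x)).smul_const (F x)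
      by_cases hxs : x ∈ s <;> simpa [hxs] using hx
  exact tendsto_nhds_unique hlim (by simp only [h, tendsto_const_nhds])

section ContinuousMap

variable {𝕜 : Type*} [RCLike 𝕜] [NormedSpace 𝕜 E] {X : Type*} [TopologicalSpace X]
  [CompactSpace X] [MeasurableSpace X] [OpensMeasurableSpace X] {μ : Measure X} {F : X → E}

theorem integrable_continuousMap_smul (hF : Integrable F μ) (φ : C(X, 𝕜)) :
    Integrable (fun x => φ x • F x) μ :=
  hF.bdd_smul ‖φ‖ φ.continuous.aestronglyMeasurable (ae_of_all _ φ.norm_coe_le_norm)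

theorem continuous_integral_continuousMap_smul [NormedSpace ℝ E] (hF : Integrable F μ) :
    Continuous fun φ : C(X, 𝕜) => ∫ x, φ x • F x ∂μ := by
  refine (LipschitzWith.of_dist_le' (K := ∫ x, ‖F x‖ ∂μ) fun φ ψ => ?_).continuous
  rw [dist_eq_norm, ← integral_sub (integrable_continuousMap_smul hF φ)
    (integrable_continuousMap_smul hF ψ), mul_comm, ← integral_const_mul]
  refine norm_integral_le_of_norm_le (hF.norm.const_mul _) (ae_of_all _ fun x => ?_)
  rw [← sub_smul, norm_smul, dist_eq_norm]
  gcongr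
  exact (φ - ψ).norm_coe_le_norm x

end ContinuousMap

variable [NormedSpace ℂ E] {T : ℝ} [Fact (0 < T)]

theorem fourierCoeff_sub {F G : AddCircle T → E} (hF : Integrable F AddCircle.haarAddCircle)
    (hG : Integrable G AddCircle.haarAddCircle) (n : ℤ) :
    fourierCoeff (F - G) n = fourierCoeff F n - fourierCoeff G n := by
  simp only [fourierCoeff, Pi.sub_apply, smul_sub]
  exact integral_sub (hF.fourier_smul _) (hG.fourier_smul _)

theorem ae_eq_zero_of_fourierCoeff_eq_zero [CompleteSpace E] {F : AddCircle T → E}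
    (hF : Integrable F AddCircle.haarAddCircle) (h : ∀ n, fourierCoeff F n = 0) :
    F =ᵐ[AddCircle.haarAddCircle] 0 := by
  have hspan : ∀ φ ∈ Submodule.span ℂ (range (@fourier T)),
      ∫ t, φ t • F t ∂AddCircle.haarAddCircle = 0 := fun φ hφ => by
    induction hφ using Submodule.span_induction with
    | mem φ hφ =>
      obtain ⟨n, rfl⟩ := hφ
      simpa [fourierCoeff] using h (-n)
    | zero => simp
    | add φ ψ _ _ hφ hψ =>
      simp only [ContinuousMap.add_apply, add_smul]
      rw [integral_add (integrable_continuousMap_smul hF φ) (integrable_continuousMap_smul hF ψ),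
        hφ, hψ, add_zero]
    | smul a φ _ hφ =>
      simp only [ContinuousMap.smul_apply, smul_assoc]
      rw [integral_smul, hφ, smul_zero]
  have hall := (continuous_integral_continuousMap_smul hF).ext_on
    (Submodule.dense_iff_topologicalClosure_eq_top.2 span_fourier_closure_eq_top)
    continuous_const hspan
  refine ae_eq_zero_of_forall_integral_boundedContinuous_smul_eq_zero hF fun φ => ?_
  exact (integral_congr_ae (ae_of_all _ fun t => (Complex.coe_smul (φ t : ℝ) (F t)).symm)).trans
    (congrFun hall ⟨fun t => ((φ t : ℝ) : ℂ), by fun_prop⟩)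

theorem ae_eq_of_fourierCoeff_eq [CompleteSpace E] {F G : AddCircle T → E}
    (hF : Integrable F AddCircle.haarAddCircle) (hG : Integrable G AddCircle.haarAddCircle)
    (h : fourierCoeff F = fourierCoeff G) : F =ᵐ[AddCircle.haarAddCircle] G := by
  refine (sub_ae_eq_zero F G).1 (ae_eq_zero_of_fourierCoeff_eq_zero (hF.sub hG) fun n => ?_)
  rw [fourierCoeff_sub hF hG, h, sub_self]

end Uniqueness

section Convolution

variable {T : ℝ} [Fact (0 < T)] {F G : AddCircle T → ℂ}

theorem memLp_two_of_memℓp_fourierCoeff (hF : Integrable F AddCircle.haarAddCircle)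
    (hcoeff : Memℓp (fourierCoeff F) 2) : MemLp F 2 AddCircle.haarAddCircle := by
  set H := fourierBasis (T := T).repr.symm ⟨fourierCoeff F, hcoeff⟩
  have hcoeffH : fourierCoeff F = fourierCoeff H := by
    funext k
    rw [← fourierBasis_repr, LinearIsometryEquiv.apply_symm_apply]
  have hH := Lp.memLp H
  exact hH.ae_eq (ae_eq_of_fourierCoeff_eq hF (hH.integrable one_le_two) hcoeffH).symm

theorem inner_toLp_star {X : Type*} [MeasurableSpace X] {μ : Measure X} {g : X → ℂ}
    (hg : MemLp g 2 μ) (u : Lp ℂ 2 μ) : inner ℂ (hg.star.toLp _) u = ∫ x, g x * u x ∂μ := by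
  rw [L2.inner_def]
  refine integral_congr_ae ?_
  filter_upwards [hg.star.coeFn_toLp] with x hx
  rw [hx, RCLike.inner_apply', Pi.star_apply, ← starRingEnd_apply, Complex.conj_conj]

theorem hasSum_fourierCoeff_mul_fourierCoeff (hF : MemLp F 2 AddCircle.haarAddCircle)
    (hG : MemLp G 2 AddCircle.haarAddCircle) (n : ℤ) :
    HasSum (fun k => fourierCoeff F k * fourierCoeff G (n - k))
      (fourierCoeff (fun t => F t * G t) n) := by
  have hH : MemLp (fun t => fourier (-n) t * G t) 2 AddCircle.haarAddCircle :=
    hG.of_le ((fourier (-n)).continuous.aestronglyMeasurable.mul hG.1)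
      (ae_of_all _ fun t => by rw [norm_mul, fourier_apply, Circle.norm_coe, one_mul])
  have hcoeffG : ∀ k, inner ℂ (hH.star.toLp _) (fourierBasis k) = fourierCoeff G (n - k) :=
      fun k => by
    rw [inner_toLp_star hH, fourierCoeff]
    refine integral_congr_ae ?_
    filter_upwards [coeFn_fourierLp (T := T) 2 k] with t ht
    rw [coe_fourierBasis, ht, smul_eq_mul, (by ring : -(n - k) = -n + k), fourier_add]
    ring
  have hcoeffF : ∀ k, inner ℂ (fourierBasis k) (hF.toLp F) = fourierCoeff F k := fun k => by
    rw [← HilbertBasis.repr_apply_apply, fourierBasis_repr, fourierCoeff_congr_ae hF.coeFn_toLp]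
  have hcoeffFG : inner ℂ (hH.star.toLp _) (hF.toLp F) = fourierCoeff (fun t => F t * G t) n := by
    rw [inner_toLp_star hH, fourierCoeff]
    refine integral_congr_ae ?_
    filter_upwards [hF.coeFn_toLp] with t ht
    rw [ht, smul_eq_mul]
    ring
  rw [← hcoeffFG]
  refine (fourierBasis.hasSum_inner_mul_inner (hH.star.toLp _) (hF.toLp F)).congr_fun fun k => ?_
  rw [hcoeffF, hcoeffG, mul_comm]

end Convolution

section FourierCoef

variable {f g : ℝ → ℂ}

theorem fourierCoef_congr (h : EqOn f g (Ioo 0 (2 * π))) : fourierCoef f = fourierCoef g := by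
  funext k
  rw [fourierCoef, fourierCoef]
  congr 1
  exact intervalIntegral.integral_congr_Ioo_of_le two_pi_pos.le fun t ht => by
    simp only [h ht]

theorem norm_fourierCoef_le {M : ℝ} (h : ∀ t, ‖f t‖ ≤ M) (k : ℤ) : ‖fourierCoef f k‖ ≤ M := by
  have hint := intervalIntegral.norm_integral_le_of_norm_le_const (a := 0) (b := 2 * π)
    (f := fun t : ℝ => f t * Complex.exp (-I * k * t)) (C := M) fun t _ => by
      rw [norm_mul, Complex.norm_exp]
      simpa using h t
  have hpi : ‖(1 / (2 * (π : ℂ)))‖ = (2 * π)⁻¹ := by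
    simp [abs_of_pos pi_pos, mul_comm]
  rw [fourierCoef, norm_mul, hpi, inv_mul_le_iff₀ two_pi_pos, mul_comm]
  simpa [abs_of_pos pi_pos, mul_comm] using hint

local instance fact_two_pi_pos : Fact (0 < 2 * π) := ⟨two_pi_pos⟩

theorem fourierCoef_eq_fourierCoeff_liftIoc (f : ℝ → ℂ) :
    fourierCoef f = fourierCoeff (AddCircle.liftIoc (2 * π) 0 f) := by
  funext k
  rw [fourierCoeff_eq_intervalIntegral _ _ 0, zero_add, fourierCoef, Complex.real_smul]
  congr 1
  · push_cast
    rfl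
  · simp_rw [intervalIntegral.integral_of_le two_pi_pos.le]
    refine setIntegral_congr_fun measurableSet_Ioc fun x hx => ?_
    have hpi : (π : ℂ) ≠ 0 := mod_cast pi_ne_zero
    rw [AddCircle.liftIoc_coe_apply (by simpa using hx), fourier_coe_apply, smul_eq_mul, mul_comm]
    congr 2
    push_cast
    field_simp

theorem memLp_liftIoc_haarAddCircle {q : ℝ≥0∞} (hf : MemLp f q (volume.restrict (Ioc 0 (2 * π)))) :
    MemLp (AddCircle.liftIoc (2 * π) 0 f) q AddCircle.haarAddCircle := by
  rw [memLp_haarAddCircle_iff]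
  exact MemLp.memLp_liftIoc (by rwa [zero_add])

theorem hasSum_fourierCoef_mul_fourierCoef (hf : IntervalIntegrable f volume 0 (2 * π))
    (hcoef : Memℓp (fourierCoef f) 2) (hg : MemLp g 2 (volume.restrict (Ioc 0 (2 * π)))) (n : ℤ) :
    HasSum (fun k => fourierCoef f k * fourierCoef g (n - k))
      (fourierCoef (fun t => f t * g t) n) := by
  have hfint : MemLp f 1 (volume.restrict (Ioc 0 (2 * π))) :=
    memLp_one_iff_integrable.2
      ((intervalIntegrable_iff_integrableOn_Ioc_of_le two_pi_pos.le).1 hf)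
  simp only [fourierCoef_eq_fourierCoeff_liftIoc] at hcoef ⊢
  exact hasSum_fourierCoeff_mul_fourierCoeff (memLp_two_of_memℓp_fourierCoeff
    (memLp_one_iff_integrable.1 (memLp_liftIoc_haarAddCircle hfint)) hcoef)
    (memLp_liftIoc_haarAddCircle hg) n

theorem memℓp_fourierCoef_of_ApNorm_ne_top {p : ℝ} (hp : 0 < p) (hf : ApNorm p f ≠ ⊤) :
    Memℓp (fourierCoef f) (ENNReal.ofReal p) := by
  have hsum : ∑' k, ‖fourierCoef f k‖ₑ ^ p ≠ ⊤ := fun h =>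
    hf (by simp only [ApNorm, ← enorm_eq_nnnorm, h, ENNReal.top_rpow_of_pos (one_div_pos.2 hp)])
  refine memℓp_gen ?_
  simpa [ENNReal.toReal_ofReal hp.le, ← ENNReal.toReal_rpow] using ENNReal.summable_toReal hsum

theorem fourierCoef_exp_mul_sub (a b : ℝ) (k : ℤ) :
    fourierCoef (fun t => Complex.exp (I * (a * t + b : ℝ))) k * (a - k) =
      (Complex.exp (I * (a * (2 * π) + b : ℝ)) - Complex.exp (I * b)) / (2 * π * I) := by
  have hderiv : ∀ t ∈ uIcc 0 (2 * π), HasDerivAt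
      (fun t : ℝ => Complex.exp (I * (a * t + b : ℝ)) * Complex.exp (-I * k * t))
      (I * (a - k) * (Complex.exp (I * (a * t + b : ℝ)) * Complex.exp (-I * k * t))) t :=
        fun t _ => by
    have hlin : HasDerivAt (fun t : ℝ => I * (a * t + b : ℝ)) (I * a) t := by
      simpa using ((((hasDerivAt_id t).const_mul a).add_const b).ofReal_comp).const_mul I
    have hchar : HasDerivAt (fun t : ℝ => -I * k * t) (-I * k) t := by
      simpa using (hasDerivAt_id t).ofReal_comp.const_mul (-I * k)
    exact (hlin.cexp.mul hchar.cexp).congr_deriv (by ring)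
  have hFTC := intervalIntegral.integral_eq_sub_of_hasDerivAt hderiv
    (Continuous.intervalIntegrable (by fun_prop) _ _)
  have hperiod : Complex.exp (-I * k * (2 * π : ℝ)) = 1 := by
    rw [Complex.exp_eq_one_iff]
    exact ⟨-k, by push_cast; ring⟩
  have hpi : (π : ℂ) ≠ 0 := mod_cast pi_ne_zero
  rw [intervalIntegral.integral_const_mul, hperiod] at hFTC
  rw [fourierCoef, eq_div_iff (by simp [hpi]), one_div]
  field_simp
  simpa [mul_comm, mul_assoc, mul_left_comm] using hFTC

theorem norm_exp_sub_exp_div_le (x y : ℝ) :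
    ‖(Complex.exp (I * x) - Complex.exp (I * y)) / (2 * π * I)‖ ≤ 1 := by
  have hnum : ‖Complex.exp (I * x) - Complex.exp (I * y)‖ ≤ 1 + 1 :=
    norm_sub_le_of_le (Complex.norm_exp_I_mul_ofReal x).le (Complex.norm_exp_I_mul_ofReal y).le
  have hden : ‖(2 * π * I : ℂ)‖ = 2 * π := by simp [abs_of_pos pi_pos]
  rw [norm_div, hden, div_le_one two_pi_pos]
  linarith [pi_gt_three]

end FourierCoef

theorem exists_tsum_enorm_fourierCoef_exp_mul_rpow_le {p : ℝ} (hp1 : 1 < p) (hp2 : p ≤ 2) :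
    ∃ C : ℝ, 0 < C ∧ ∀ (a b : ℝ) {f : ℝ → ℂ}, IntervalIntegrable f volume 0 (2 * π) →
      Memℓp (fourierCoef f) 2 →
      ∑' k, ‖fourierCoef (fun t => f t * Complex.exp (I * (a * t + b : ℝ))) k‖ₑ ^ p ≤
        ENNReal.ofReal C * ∑' k, ‖fourierCoef f k‖ₑ ^ p := by
  obtain ⟨C, hC, hker⟩ := exists_sum_norm_sum_mul_sub_rpow_le hp1 hp2
  refine ⟨C, hC, fun a b f hf hcoef => ?_⟩
  set e : ℝ → ℂ := fun t => Complex.exp (I * (a * t + b : ℝ))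
  have hnorm : ∀ t, ‖e t‖ ≤ 1 := fun t => (Complex.norm_exp_I_mul_ofReal _).le
  have he : Continuous e := by fun_prop
  refine tsum_enorm_rpow_le_of_forall_sum_le (by linarith) hC.le
    (hasSum_fourierCoef_mul_fourierCoef hf hcoef
      (.of_bound he.aestronglyMeasurable 1 (ae_of_all _ hnorm))) fun S T => ?_
  exact hker (norm_fourierCoef_le hnorm) (norm_exp_sub_exp_div_le _ _)
    (fourierCoef_exp_mul_sub a b) S T _

theorem statement14_general {p : ℝ} (hp1 : 1 < p) (hp2 : p ≤ 2) :
    ∃ c : ℝ, 0 < c ∧ ∀ (l : ℝ → ℝ) (a b : ℝ) (f : ℝ → ℂ),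
      (∀ t ∈ Ioo 0 (2 * π), l t = a * t + b) → IntervalIntegrable f volume 0 (2 * π) →
      ApNorm p (fun t => Complex.exp (I * l t) * f t) ≤ ENNReal.ofReal c * ApNorm p f := by
  have hp0 : 0 < p := one_pos.trans hp1
  obtain ⟨C, hC, hbound⟩ := exists_tsum_enorm_fourierCoef_exp_mul_rpow_le hp1 hp2
  refine ⟨C ^ (1 / p), by positivity, fun l a b f hl hf => ?_⟩
  rcases eq_or_ne (ApNorm p f) ⊤ with htop | hfin
  · simp [htop, ENNReal.mul_top, rpow_pos_of_pos hC]
  have hcoef : Memℓp (fourierCoef f) 2 :=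
    (memℓp_fourierCoef_of_ApNorm_ne_top hp0 hfin).of_exponent_ge
      (by simpa using ENNReal.ofReal_le_ofReal hp2)
  have hphase : fourierCoef (fun t => Complex.exp (I * l t) * f t) =
      fourierCoef fun t => f t * Complex.exp (I * (a * t + b : ℝ)) :=
    fourierCoef_congr fun t ht => by simp only [hl t ht, mul_comm]
  simp only [ApNorm, hphase, ← enorm_eq_nnnorm]
  rw [← ENNReal.ofReal_rpow_of_pos hC, ← ENNReal.mul_rpow_of_nonneg _ _ (by positivity)]
  exact ENNReal.rpow_le_rpow (hbound a b hf hcoef) (by positivity)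

end

/-- Lemma 9: multiplication by e^{il}, where l is 2π-periodic and linear
on (0,2π), is bounded on A_p(𝕋) with constant independent of l. -/
theorem statement14
    (p : ℝ) (hp1 : 1 < p) (hp2 : p < 2) :
    ∃ c : ℝ, 0 < c ∧
      ∀ (l : ℝ → ℝ) (a b : ℝ) (f : ℝ → ℂ),
        Function.Periodic l (2 * Real.pi) →
        (∀ t ∈ Ioo 0 (2 * Real.pi), l t = a * t + b) →
        IntervalIntegrable f volume 0 (2 * Real.pi) →
        ApNorm p (fun t => Complex.exp (Complex.I * (l t : ℂ)) * f t)
          ≤ ENNReal.ofReal c * ApNorm p f := by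
  obtain ⟨c, hc, hbound⟩ := statement14_general hp1 hp2.le
  exact ⟨c, hc, fun l a b f _ hl hf => hbound l a b f hl hf⟩
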